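/- Classification of the stationary axisymmetric kernel (s = +2): A smooth function Φ : U → ℂ on U = {(r,z) : r > r₊, −1 < z < 1} satisfies Δ²∂_r⁴(Δ²Φ) = 0 and 𝒯₊₂ Φ = 0 everywhere on U if and only if there exists a (then unique) c = (c₁,…,c₈) ∈ ℂ⁸ such that Φ = Δ^{−2}·Φ_Ker(c) on U. That is, the s = +2 stationary axisymmetric kernel equals Δ^{−2} times the s = −2 one. -/

import Mathlib

noncomputable section

open ComplexConjugate Filter

namespace Kerr

/-- A point of the Boyer-Lindquist-type coordinate chart `(t, r, z, φ)`. -/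
abbrev Pt := Fin 4 → ℝ

/-- Partial derivative of a real-valued function on the chart. -/
def pd (i : Fin 4) (f : Pt → ℝ) (p : Pt) : ℝ :=
  fderiv ℝ f p (Pi.single i 1)

/-- Partial derivative of a complex-valued function on the chart. -/
def pdC (i : Fin 4) (f : Pt → ℂ) (p : Pt) : ℂ :=
  fderiv ℝ f p (Pi.single i 1)

/-- `Δ := r(r−2M)+a²` for the Kerr black hole with `M = 1`. -/
def Del (a r : ℝ) : ℝ := r * (r - 2) + a ^ 2

/-- `Σ := r² + a²z²`. -/
def Sig (a r z : ℝ) : ℝ := r ^ 2 + a ^ 2 * z ^ 2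

/-- Outer horizon radius `r₊ = 1 + √(1−a²)` (with `M = 1`). -/
def rplus (a : ℝ) : ℝ := 1 + Real.sqrt (1 - a ^ 2)

/-- Inner horizon radius `r₋ = 1 − √(1−a²)` (with `M = 1`). -/
def rminus (a : ℝ) : ℝ := 1 - Real.sqrt (1 - a ^ 2)

/-- The Kerr family of metrics, parametrized by mass `M` and angular momentum `J` (`a = J/M`),
in Boyer-Lindquist-type coordinates `(t,r,z,φ)`. -/
def gFam (M J : ℝ) (p : Pt) : Matrix (Fin 4) (Fin 4) ℝ :=
  Matrix.of
    ![![-(1 - 2 * M * p 1 / (p 1 ^ 2 + (J / M) ^ 2 * p 2 ^ 2)), 0, 0,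
        -(2 * M * (J / M) * p 1 * (1 - p 2 ^ 2) / (p 1 ^ 2 + (J / M) ^ 2 * p 2 ^ 2))],
      ![0, (p 1 ^ 2 + (J / M) ^ 2 * p 2 ^ 2) / (p 1 ^ 2 - 2 * M * p 1 + (J / M) ^ 2), 0, 0],
      ![0, 0, (p 1 ^ 2 + (J / M) ^ 2 * p 2 ^ 2) / (1 - p 2 ^ 2), 0],
      ![-(2 * M * (J / M) * p 1 * (1 - p 2 ^ 2) / (p 1 ^ 2 + (J / M) ^ 2 * p 2 ^ 2)), 0, 0,
        (1 - p 2 ^ 2) / (p 1 ^ 2 + (J / M) ^ 2 * p 2 ^ 2) *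
          (2 * (J / M) ^ 2 * M * p 1 * (1 - p 2 ^ 2)
            + ((J / M) ^ 2 + p 1 ^ 2) * (p 1 ^ 2 + (J / M) ^ 2 * p 2 ^ 2))]]

/-- The background Kerr metric with `M = 1` and spin `a`. -/
def g (a : ℝ) : Pt → Matrix (Fin 4) (Fin 4) ℝ := gFam 1 a

/-- Inverse Kerr metric. -/
def gInv (a : ℝ) (p : Pt) : Matrix (Fin 4) (Fin 4) ℝ := (g a p)⁻¹

/-- Christoffel symbols `Γ^l_{m n}` of the Kerr metric. -/
def Chr (a : ℝ) (l m n : Fin 4) (p : Pt) : ℝ :=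
  (1 / 2) * ∑ s : Fin 4, gInv a p l s *
    (pd m (fun q => g a q s n) p + pd n (fun q => g a q s m) p - pd s (fun q => g a q m n) p)

/-- Covariant derivative `(∇_c h)_{α β}` of a covariant 2-tensor field. -/
def covD2 (a : ℝ) (h : Pt → Matrix (Fin 4) (Fin 4) ℝ) (c α β : Fin 4) (p : Pt) : ℝ :=
  pd c (fun q => h q α β) p
    - ∑ s : Fin 4, Chr a s c α p * h p s β
    - ∑ s : Fin 4, Chr a s c β p * h p α s

/-- Covariant derivative `(∇_c T)_{α β γ}` of a covariant 3-tensor field. -/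
def covD3 (a : ℝ) (T : Fin 4 → Fin 4 → Fin 4 → Pt → ℝ) (c α β γ : Fin 4) (p : Pt) : ℝ :=
  pd c (fun q => T α β γ q) p
    - ∑ s : Fin 4, Chr a s c α p * T s β γ p
    - ∑ s : Fin 4, Chr a s c β p * T α s γ p
    - ∑ s : Fin 4, Chr a s c γ p * T α β s p

/-- The Killing vector `k = x ∂_t + y ∂_φ` of the Kerr background. -/
def kvec (x y : ℝ) : Fin 4 → ℝ := ![x, 0, 0, y]

/-- The lowered Killing covector `k_α`. -/
def kco (a x y : ℝ) (p : Pt) (α : Fin 4) : ℝ := ∑ s : Fin 4, g a p α s * kvec x y s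

/-- `∇_β k^λ` for the Killing vector `k = x ∂_t + y ∂_φ`. -/
def covDk (a x y : ℝ) (β l : Fin 4) (p : Pt) : ℝ :=
  pd β (fun _ => kvec x y l) p + ∑ s : Fin 4, Chr a l β s p * kvec x y s

/-- Trace-reversed metric perturbation `h̄_{αβ} = h_{αβ} − ½ g_{αβ} g^{λσ} h_{λσ}`. -/
def trRev (a : ℝ) (h : Pt → Matrix (Fin 4) (Fin 4) ℝ) (p : Pt) : Matrix (Fin 4) (Fin 4) ℝ :=
  Matrix.of fun α β =>
    h p α β - (1 / 2) * g a p α β * ∑ l : Fin 4, ∑ s : Fin 4, gInv a p l s * h p l s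

/-- Abbott–Deser 2-form `F_{αβ}[h, k]` (lowered indices) for the Killing vector
`k = x ∂_t + y ∂_φ`. -/
def ADform (a : ℝ) (h : Pt → Matrix (Fin 4) (Fin 4) ℝ) (x y : ℝ) (α β : Fin 4) (p : Pt) : ℝ :=
  (1 / (8 * Real.pi)) *
    ((1 / 2) * (∑ l : Fin 4, kvec x y l *
        (covD2 a (trRev a h) α β l p - covD2 a (trRev a h) β α l p))
    + (1 / 2) * (∑ l : Fin 4,
        (trRev a h p l α * covDk a x y β l p - trRev a h p l β * covDk a x y α l p))
    - (1 / 2) *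
        (kco a x y p α * ∑ l : Fin 4, ∑ s : Fin 4, gInv a p l s * covD2 a (trRev a h) s β l p
        - kco a x y p β * ∑ l : Fin 4, ∑ s : Fin 4, gInv a p l s * covD2 a (trRev a h) s α l p))

/-- Abbott–Deser 2-form with raised indices, `F^{αβ}[h,k]`. -/
def ADformUp (a : ℝ) (h : Pt → Matrix (Fin 4) (Fin 4) ℝ) (x y : ℝ) (α β : Fin 4) (p : Pt) : ℝ :=
  ∑ m : Fin 4, ∑ n : Fin 4, gInv a p α m * gInv a p β n * ADform a h x y m n p

/-- The Abbott–Deser charge density `ℱ[k] := Σ F^{rt}[h,k]`. -/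
def Fdens (a : ℝ) (h : Pt → Matrix (Fin 4) (Fin 4) ℝ) (x y : ℝ) (p : Pt) : ℝ :=
  Sig a (p 1) (p 2) * ADformUp a h x y 1 0 p

/-- The Abbott–Deser charge `Q[h, x∂_t + y∂_φ, S_{t,r}] = ∫₀^{2π}∫_{−1}^1 Σ F^{rt} dz dφ`. -/
def ADcharge (a : ℝ) (h : Pt → Matrix (Fin 4) (Fin 4) ℝ) (x y t r : ℝ) : ℝ :=
  ∫ φ in (0:ℝ)..(2 * Real.pi), ∫ z in (-1:ℝ)..(1:ℝ),
    Sig a r z * ADformUp a h x y 1 0 ![t, r, z, φ]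

/-! ### The Kinnersley tetrad and Newman-Penrose quantities -/

/-- The Newman–Penrose coefficient `ρ = −1/(r − i a z)`. -/
def rhoC (a : ℝ) (p : Pt) : ℂ := -1 / ((p 1 : ℂ) - Complex.I * (a : ℂ) * (p 2 : ℂ))

/-- Kinnersley tetrad leg `l^μ`. -/
def lvec (a : ℝ) (p : Pt) : Fin 4 → ℂ := fun i =>
  ((![(p 1 ^ 2 + a ^ 2) / Del a (p 1), 1, 0, a / Del a (p 1)] : Fin 4 → ℝ) i : ℂ)

/-- Kinnersley tetrad leg `n^μ`. -/
def nvec (a : ℝ) (p : Pt) : Fin 4 → ℂ := fun i =>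
  ((![(p 1 ^ 2 + a ^ 2) / (2 * Sig a (p 1) (p 2)), -Del a (p 1) / (2 * Sig a (p 1) (p 2)), 0,
      a / (2 * Sig a (p 1) (p 2))] : Fin 4 → ℝ) i : ℂ)

/-- Kinnersley tetrad leg `m^μ`. -/
def mvec (a : ℝ) (p : Pt) : Fin 4 → ℂ := fun i =>
  (-(conj (rhoC a p)) * (Real.sqrt (1 - p 2 ^ 2) : ℂ) / (Real.sqrt 2 : ℂ)) *
    (![Complex.I * (a : ℂ), 0, -1, Complex.I / (1 - (p 2 : ℂ) ^ 2)] i)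

/-- Kinnersley tetrad leg `m̄^μ`. -/
def mbvec (a : ℝ) (p : Pt) : Fin 4 → ℂ := fun i => conj (mvec a p i)

/-- Lowered tetrad covector `l_μ`. -/
def lco (a : ℝ) (p : Pt) (i : Fin 4) : ℂ := ∑ j : Fin 4, (g a p i j : ℂ) * lvec a p j

/-- Lowered tetrad covector `n_μ`. -/
def nco (a : ℝ) (p : Pt) (i : Fin 4) : ℂ := ∑ j : Fin 4, (g a p i j : ℂ) * nvec a p j

/-- Lowered tetrad covector `m_μ`. -/
def mco (a : ℝ) (p : Pt) (i : Fin 4) : ℂ := ∑ j : Fin 4, (g a p i j : ℂ) * mvec a p j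

/-- Lowered tetrad covector `m̄_μ`. -/
def mbco (a : ℝ) (p : Pt) (i : Fin 4) : ℂ := ∑ j : Fin 4, (g a p i j : ℂ) * mbvec a p j

/-- Newman–Penrose spin coefficient `μ = ρ²ρ̄Δ/2`. -/
def muNP (a : ℝ) (p : Pt) : ℂ := rhoC a p ^ 2 * conj (rhoC a p) * (Del a (p 1) : ℂ) / 2

/-- Newman–Penrose spin coefficient `τ = −iaρρ̄√(1−z²)/√2`. -/
def tauNP (a : ℝ) (p : Pt) : ℂ :=
  -Complex.I * (a : ℂ) * rhoC a p * conj (rhoC a p) * (Real.sqrt (1 - p 2 ^ 2) : ℂ)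
    / (Real.sqrt 2 : ℂ)

/-- Newman–Penrose spin coefficient `π = iaρ²√(1−z²)/√2`. -/
def piNP (a : ℝ) (p : Pt) : ℂ :=
  Complex.I * (a : ℂ) * rhoC a p ^ 2 * (Real.sqrt (1 - p 2 ^ 2) : ℂ) / (Real.sqrt 2 : ℂ)

/-- Newman–Penrose spin coefficient `γ = μ + ρρ̄(r−1)/2`. -/
def gamNP (a : ℝ) (p : Pt) : ℂ :=
  muNP a p + rhoC a p * conj (rhoC a p) * ((p 1 : ℂ) - 1) / 2

/-- Newman–Penrose spin coefficient `β = −ρ̄z/(2√2√(1−z²))`. -/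
def betNP (a : ℝ) (p : Pt) : ℂ :=
  -(conj (rhoC a p)) * (p 2 : ℂ) / (2 * (Real.sqrt 2 : ℂ) * (Real.sqrt (1 - p 2 ^ 2) : ℂ))

/-- Newman–Penrose spin coefficient `α = π − β̄`. -/
def alpNP (a : ℝ) (p : Pt) : ℂ := piNP a p - conj (betNP a p)

/-- Directional derivative along a (complex) vector field. -/
def dirD (v : Pt → Fin 4 → ℂ) (f : Pt → ℂ) (p : Pt) : ℂ := ∑ i : Fin 4, v p i * pdC i f p

/-- First-order operator `(v^μ ∂_μ + c)` acting on complex scalars. -/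
def opD (v : Pt → Fin 4 → ℂ) (c : Pt → ℂ) (f : Pt → ℂ) : Pt → ℂ :=
  fun p => dirD v f p + c p * f p

/-- The CCK operator `₊₂Ĥ_{μν}` applied to a Hertz potential `Φ`. -/
def Hplus (a : ℝ) (Φ : Pt → ℂ) (p : Pt) (i j : Fin 4) : ℂ :=
  -(rhoC a p) ^ (-4 : ℤ) *
    (lco a p i * lco a p j *
        opD (mbvec a) (fun q => -3 * alpNP a q - conj (betNP a q) + 5 * piNP a q)
          (opD (mbvec a) (fun q => -4 * alpNP a q + piNP a q) Φ) p
    + mco a p i * mco a p j *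
        opD (nvec a) (fun q => 5 * muNP a q - 3 * gamNP a q + conj (gamNP a q))
          (opD (nvec a) (fun q => muNP a q - 4 * gamNP a q) Φ) p
    - (1 / 2) * (lco a p i * mco a p j + lco a p j * mco a p i) *
        (opD (mbvec a)
            (fun q => -3 * alpNP a q + conj (betNP a q) + 5 * piNP a q + conj (tauNP a q))
            (opD (nvec a) (fun q => muNP a q - 4 * gamNP a q) Φ) p
        + opD (nvec a)
            (fun q => 5 * muNP a q - conj (muNP a q) - 3 * gamNP a q - conj (gamNP a q))
            (opD (mbvec a) (fun q => -4 * alpNP a q + piNP a q) Φ) p))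

/-- The CCK operator `₋₂Ĥ_{μν}` applied to a Hertz potential `Φ`. -/
def Hminus (a : ℝ) (Φ : Pt → ℂ) (p : Pt) (i j : Fin 4) : ℂ :=
  -(nco a p i * nco a p j *
        opD (mvec a) (fun q => conj (alpNP a q) + 3 * betNP a q - tauNP a q)
          (opD (mvec a) (fun q => 4 * betNP a q + 3 * tauNP a q) Φ) p
    + mbco a p i * mbco a p j *
        opD (lvec a) (fun q => -(rhoC a q))
          (opD (lvec a) (fun q => 3 * rhoC a q) Φ) p
    - (1 / 2) * (nco a p i * mbco a p j + nco a p j * mbco a p i) *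
        (opD (mvec a) (fun q => -2 * conj (alpNP a q) + 2 * betNP a q - tauNP a q)
            (opD (lvec a) (fun q => 3 * rhoC a q) Φ) p
        + opD (lvec a) (fun q => conj (rhoC a q) - rhoC a q)
            (opD (mvec a) (fun q => 4 * betNP a q + 3 * tauNP a q) Φ) p))

/-- `ₛĤ_{μν} Φ` for `s = ±2`. -/
def Hop (a : ℝ) (s : ℤ) (Φ : Pt → ℂ) (p : Pt) (i j : Fin 4) : ℂ :=
  if s = 2 then Hplus a Φ p i j else Hminus a Φ p i j

/-- The CCK metric perturbation `h^{CCK}[s,Φ]_{μν} := ₛĤ_{μν}Φ + c.c.`. -/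
def hCCK (a : ℝ) (s : ℤ) (Φ : Pt → ℂ) (p : Pt) : Matrix (Fin 4) (Fin 4) ℝ :=
  Matrix.of fun i j => (Hop a s Φ p i j + conj (Hop a s Φ p i j)).re

/-- The homogeneous spin-`s` Teukolsky operator on the Kerr exterior. -/
def Teuk (a : ℝ) (s : ℤ) (Φ : Pt → ℂ) (p : Pt) : ℂ :=
  -((((p 1 : ℂ) ^ 2 + (a : ℂ) ^ 2) ^ 2 / (Del a (p 1) : ℂ)
      - (a : ℂ) ^ 2 * (1 - (p 2 : ℂ) ^ 2)) * pdC 0 (pdC 0 Φ) p)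
  - (4 * (a : ℂ) * (p 1 : ℂ) / (Del a (p 1) : ℂ)) * pdC 0 (pdC 3 Φ) p
  - ((a : ℂ) ^ 2 / (Del a (p 1) : ℂ) - 1 / (1 - (p 2 : ℂ) ^ 2)) * pdC 3 (pdC 3 Φ) p
  + 2 * (s : ℂ) * (((p 1 : ℂ) ^ 2 - (a : ℂ) ^ 2) / (Del a (p 1) : ℂ) - (p 1 : ℂ)
      - Complex.I * (a : ℂ) * (p 2 : ℂ)) * pdC 0 Φ p
  + 2 * (s : ℂ) * ((a : ℂ) * ((p 1 : ℂ) - 1) / (Del a (p 1) : ℂ)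
      + Complex.I * (p 2 : ℂ) / (1 - (p 2 : ℂ) ^ 2)) * pdC 3 Φ p
  + (Del a (p 1) : ℂ) ^ (-s) *
      pdC 1 (fun q => (Del a (q 1) : ℂ) ^ (s + 1) * pdC 1 Φ q) p
  + pdC 2 (fun q => (1 - (q 2 : ℂ) ^ 2) * pdC 2 Φ q) p
  - (((s : ℂ) * ((s : ℂ) + 1) * (p 2 : ℂ) ^ 2 - (s : ℂ)) / (1 - (p 2 : ℂ) ^ 2)) * Φ p

/-- The exterior Kerr coordinate patch `{r > r₊, −1 < z < 1}`. -/
def ext (a : ℝ) : Set Pt := {p | rplus a < p 1 ∧ -1 < p 2 ∧ p 2 < 1}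

/-- The closed exterior patch `{r > r₊, −1 ≤ z ≤ 1}`. -/
def extCl (a : ℝ) : Set Pt := {p | rplus a < p 1 ∧ -1 ≤ p 2 ∧ p 2 ≤ 1}

/-- A Fourier mode Hertz potential `Φ(t,r,z,φ) = ψ(r,z) e^{i(mφ − ωt)}`. -/
def fourierMode (m : ℤ) (ω : ℝ) (ψ : ℝ → ℝ → ℂ) : Pt → ℂ :=
  fun p => ψ (p 1) (p 2) * Complex.exp (Complex.I * ((m : ℂ) * (p 3 : ℂ) - (ω : ℂ) * (p 0 : ℂ)))

/-- The 2D domain `U = {(r,z) : r > r₊, −1 < z < 1}`. -/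
def U2 (a : ℝ) : Set (ℝ × ℝ) := {q | rplus a < q.1 ∧ -1 < q.2 ∧ q.2 < 1}

/-- The closed 2D domain `{(r,z) : r > r₊, −1 ≤ z ≤ 1}`. -/
def U2cl (a : ℝ) : Set (ℝ × ℝ) := {q | rplus a < q.1 ∧ -1 ≤ q.2 ∧ q.2 ≤ 1}

/-- `∂_r` of a function of `(r, z)`. -/
def pdr2 (f : ℝ → ℝ → ℂ) : ℝ → ℝ → ℂ := fun r z => deriv (fun r' => f r' z) r

/-- `∂_z` of a function of `(r, z)`. -/
def pdz2 (f : ℝ → ℝ → ℂ) : ℝ → ℝ → ℂ := fun r z => deriv (fun z' => f r z') z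

/-- The stationary axisymmetric spin-`s` Teukolsky operator
`𝒯_s Φ := Δ^{−s}∂_r(Δ^{s+1}∂_rΦ) + ∂_z((1−z²)∂_zΦ) − ((s(s+1)z²−s)/(1−z²))Φ`. -/
def TeukSAS (a : ℝ) (s : ℤ) (ψ : ℝ → ℝ → ℂ) (r z : ℝ) : ℂ :=
  (Del a r : ℂ) ^ (-s) *
      deriv (fun r' => (Del a r' : ℂ) ^ (s + 1) * deriv (fun r'' => ψ r'' z) r') r
    + deriv (fun z' => ((1 - z' ^ 2 : ℝ) : ℂ) * deriv (fun z'' => ψ r z'') z') z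
    - (((s : ℂ) * ((s : ℂ) + 1) * (z : ℂ) ^ 2 - (s : ℂ)) / (1 - (z : ℂ) ^ 2)) * ψ r z


/-- The mass perturbation `h_M := ∂g^{Kerr}/∂M` at `M = 1`, `J = a`. -/
def hM (a : ℝ) (p : Pt) : Matrix (Fin 4) (Fin 4) ℝ :=
  Matrix.of fun i j => deriv (fun M => gFam M a p i j) 1

/-- The angular-momentum perturbation `h_J := ∂g^{Kerr}/∂J` at `M = 1`, `J = a`. -/
def hJ (a : ℝ) (p : Pt) : Matrix (Fin 4) (Fin 4) ℝ :=
  Matrix.of fun i j => deriv (fun J => gFam 1 J p i j) a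

/-- The eight-parameter family `Φ_Ker(c)` of stationary axisymmetric kernel elements
(`c 0, ..., c 7` correspond to `c₁, ..., c₈`). -/
def PhiKer (a : ℝ) (c : Fin 8 → ℂ) (r z : ℝ) : ℂ :=
  (1 - (z : ℂ) ^ 2)⁻¹ *
    (c 0
    + c 1 * ((r : ℂ) - 1) * (z : ℂ)
    + c 2 * (z : ℂ) * ((z : ℂ) ^ 2 - 3)
    + c 3 * ((r : ℂ) + ((r : ℂ) - 1) * (z : ℂ) ^ 2)
    + c 4 * ((r : ℂ) ^ 2 - (a : ℂ) ^ 2) * (z : ℂ)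
    + c 5 * (r : ℂ) * ((r : ℂ) * ((r : ℂ) - 3) + 3 * (a : ℂ) ^ 2)
    + c 6 * ((r : ℂ) ^ 2 + ((r : ℂ) ^ 2 - (a : ℂ) ^ 2) * (z : ℂ) ^ 2)
    + c 7 * (r : ℂ) * (z : ℂ) *
        (((r : ℂ) * ((r : ℂ) - 3) + 3 * (a : ℂ) ^ 2) * (z : ℂ) ^ 2
          - 3 * ((r : ℂ) * ((r : ℂ) + 4) - 4 * (a : ℂ) ^ 2)))

/-- `G(z) = −4(1−a²)r₊z(1−z²)/(2z² + r₊(1−z²))²`. -/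
def Gfun (a z : ℝ) : ℝ :=
  -4 * (1 - a ^ 2) * rplus a * z * (1 - z ^ 2) / (2 * z ^ 2 + rplus a * (1 - z ^ 2)) ^ 2

/-- Outward Abbott–Deser flux through the closed surface `C_ε⁺` around the segment
`r₁ ≤ r ≤ r₂` of the axis `z = 1`, in the slice `t = t₀`: two caps at `r = r₁, r₂`
and the tube at `z = 1 − ε`. -/
def axisFluxP (a : ℝ) (h : Pt → Matrix (Fin 4) (Fin 4) ℝ) (x y t r₁ r₂ ε : ℝ) : ℝ :=
  (∫ φ in (0:ℝ)..(2 * Real.pi), ∫ z in (1 - ε)..(1:ℝ),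
      Sig a r₂ z * ADformUp a h x y 1 0 ![t, r₂, z, φ])
  - (∫ φ in (0:ℝ)..(2 * Real.pi), ∫ z in (1 - ε)..(1:ℝ),
      Sig a r₁ z * ADformUp a h x y 1 0 ![t, r₁, z, φ])
  - (∫ φ in (0:ℝ)..(2 * Real.pi), ∫ r in r₁..r₂,
      Sig a r (1 - ε) * ADformUp a h x y 2 0 ![t, r, 1 - ε, φ])

/-- Outward Abbott–Deser flux through the closed surface `C_ε⁻` around the segment
`r₁ ≤ r ≤ r₂` of the axis `z = −1`. -/
def axisFluxM (a : ℝ) (h : Pt → Matrix (Fin 4) (Fin 4) ℝ) (x y t r₁ r₂ ε : ℝ) : ℝ :=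
  (∫ φ in (0:ℝ)..(2 * Real.pi), ∫ z in (-1:ℝ)..(-1 + ε),
      Sig a r₂ z * ADformUp a h x y 1 0 ![t, r₂, z, φ])
  - (∫ φ in (0:ℝ)..(2 * Real.pi), ∫ z in (-1:ℝ)..(-1 + ε),
      Sig a r₁ z * ADformUp a h x y 1 0 ![t, r₁, z, φ])
  + (∫ φ in (0:ℝ)..(2 * Real.pi), ∫ r in r₁..r₂,
      Sig a r (-1 + ε) * ADformUp a h x y 2 0 ![t, r, -1 + ε, φ])

/-- The statement that both limiting Abbott–Deser axis charges
`Q_axis^± [h, x∂_t + y∂_φ, r₁, r₂]` vanish. -/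
def axisChargesVanish (a : ℝ) (h : Pt → Matrix (Fin 4) (Fin 4) ℝ) : Prop :=
  ∀ x y t r₁ r₂ : ℝ, rplus a < r₁ → r₁ < r₂ →
    Tendsto (fun ε => axisFluxP a h x y t r₁ r₂ ε) (nhdsWithin 0 (Set.Ioi 0)) (nhds 0) ∧
    Tendsto (fun ε => axisFluxM a h x y t r₁ r₂ ε) (nhdsWithin 0 (Set.Ioi 0)) (nhds 0)

/-- Covariant Hessian `∇_α ∇_β f` of a scalar field. -/
def hess (a : ℝ) (f : Pt → ℝ) (α β : Fin 4) (p : Pt) : ℝ :=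
  pd α (fun q => pd β f q) p - ∑ s : Fin 4, Chr a s α β p * pd s f p

/-- The linearized Ricci tensor
`δR_{αβ}[h] = −½∇^λ∇_λ h_{αβ} − ½∇_α∇_β(g^{λσ}h_{λσ}) + ∇^λ∇_{(α}h_{β)λ}`. -/
def linRicci (a : ℝ) (h : Pt → Matrix (Fin 4) (Fin 4) ℝ) (α β : Fin 4) (p : Pt) : ℝ :=
  -(1 / 2) * (∑ l : Fin 4, ∑ s : Fin 4, gInv a p l s * covD3 a (covD2 a h) l s α β p)
  - (1 / 2) * hess a (fun q => ∑ l : Fin 4, ∑ s : Fin 4, gInv a q l s * h q l s) α β p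
  + (1 / 2) * ((∑ l : Fin 4, ∑ s : Fin 4, gInv a p l s * covD3 a (covD2 a h) s α β l p)
      + (∑ l : Fin 4, ∑ s : Fin 4, gInv a p l s * covD3 a (covD2 a h) s β α l p))


/-! ### Helper lemmas -/

theorem hcast (x : ℝ) : HasDerivAt (fun t : ℝ => (t : ℂ)) 1 x := by
  simpa using (hasDerivAt_id x).ofReal_comp

theorem const_of_deriv_zero {s : Set ℝ} (hs : IsOpen s) (hc : IsPreconnected s) {f : ℝ → ℂ}
    (hf : ∀ x ∈ s, HasDerivAt f 0 x) {x₀ : ℝ} (h₀ : x₀ ∈ s) : ∃ k : ℂ, ∀ x ∈ s, f x = k := by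
  refine ⟨f x₀, fun x hx => ?_⟩
  exact hs.is_const_of_deriv_eq_zero hc
    (fun y hy => (hf y hy).differentiableAt.differentiableWithinAt)
    (fun y hy => (hf y hy).deriv) hx h₀

theorem antideriv_quad {ρ : ℝ} {f : ℝ → ℂ} {c0 c1 c2 : ℂ}
    (hf : ∀ x ∈ Set.Ioi ρ, HasDerivAt f (c0 + c1 * (x : ℂ) + c2 * (x : ℂ) ^ 2) x) :
    ∃ k : ℂ, ∀ x ∈ Set.Ioi ρ,
      f x = k + c0 * (x : ℂ) + c1 / 2 * (x : ℂ) ^ 2 + c2 / 3 * (x : ℂ) ^ 3 := by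
  have h := const_of_deriv_zero (s := Set.Ioi ρ) isOpen_Ioi isPreconnected_Ioi
    (f := fun x : ℝ => f x - (c0 * (x : ℂ) + c1 / 2 * (x : ℂ) ^ 2 + c2 / 3 * (x : ℂ) ^ 3))
    (x₀ := ρ + 1) ?_ (by simp)
  · obtain ⟨k, h⟩ := h
    refine ⟨k, fun x hx => ?_⟩
    have := h x hx
    linear_combination this
  · intro x hx
    have := (hf x hx).sub ((((hcast x).const_mul c0).add (((hcast x).pow 2).const_mul (c1 / 2))).add
      (((hcast x).pow 3).const_mul (c2 / 3)))
    refine this.congr_deriv ?_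
    push_cast
    ring

theorem iter_contDiffOn {s : Set ℝ} (hs : IsOpen s) {g : ℝ → ℂ}
    (hg : ContDiffOn ℝ (⊤ : ℕ∞) g s) (n : ℕ) : ContDiffOn ℝ (⊤ : ℕ∞) (deriv^[n] g) s := by
  induction n with
  | zero => simpa using hg
  | succ n ih =>
    rw [Function.iterate_succ_apply']
    exact ih.deriv_of_isOpen hs (by simp)

theorem hasDerivAt_iter {s : Set ℝ} (hs : IsOpen s) {g : ℝ → ℂ}
    (hg : ContDiffOn ℝ (⊤ : ℕ∞) g s) (n : ℕ) {x : ℝ} (hx : x ∈ s) :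
    HasDerivAt (deriv^[n] g) (deriv^[n + 1] g x) x := by
  rw [Function.iterate_succ_apply']
  have := (iter_contDiffOn hs hg n).differentiableOn (by simp)
  exact (this.differentiableAt (hs.mem_nhds hx)).hasDerivAt

theorem cubic_of_deriv4 {ρ : ℝ} {g : ℝ → ℂ} (hg : ContDiffOn ℝ (⊤ : ℕ∞) g (Set.Ioi ρ))
    (h4 : ∀ x ∈ Set.Ioi ρ, deriv^[4] g x = 0) :
    ∃ b : Fin 4 → ℂ, ∀ x ∈ Set.Ioi ρ,
      g x = b 0 + b 1 * (x : ℂ) + b 2 * (x : ℂ) ^ 2 + b 3 * (x : ℂ) ^ 3 := by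
  have hd := fun n x hx => hasDerivAt_iter (s := Set.Ioi ρ) isOpen_Ioi hg n (x := x) hx
  obtain ⟨k3, h3⟩ := antideriv_quad (ρ := ρ) (f := deriv^[3] g) (c0 := 0) (c1 := 0) (c2 := 0)
    (fun x hx => (hd 3 x hx).congr_deriv (by rw [h4 x hx]; ring))
  obtain ⟨k2, h2⟩ := antideriv_quad (ρ := ρ) (f := deriv^[2] g) (c0 := k3) (c1 := 0) (c2 := 0)
    (fun x hx => (hd 2 x hx).congr_deriv (by rw [h3 x hx]; ring))
  obtain ⟨k1, h1⟩ := antideriv_quad (ρ := ρ) (f := deriv^[1] g) (c0 := k2) (c1 := k3) (c2 := 0)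
    (fun x hx => (hd 1 x hx).congr_deriv (by rw [h2 x hx]; ring))
  obtain ⟨k0, h0⟩ := antideriv_quad (ρ := ρ) (f := g) (c0 := k1) (c1 := k2) (c2 := k3 / 2)
    (fun x hx => (hd 0 x hx).congr_deriv (by rw [h1 x hx]; ring))
  refine ⟨![k0, k1, k2 / 2, k3 / 2 / 3], fun x hx => ?_⟩
  simpa using h0 x hx

theorem one_sub_sq_ne {z : ℝ} (hz : z ∈ Set.Ioo (-1 : ℝ) 1) : (1 - (z : ℂ) ^ 2) ≠ 0 := by
  have h : (1 - z ^ 2 : ℝ) ≠ 0 := by nlinarith [hz.1, hz.2]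
  exact_mod_cast h

theorem Del_ne {a r : ℝ} (ha : |a| < 1) (hr : rplus a < r) : (Del a r : ℂ) ≠ 0 := by
  have h1 : 0 ≤ 1 - a ^ 2 := by nlinarith [abs_lt.mp ha]
  have h2 := Real.sq_sqrt h1
  have h3 := Real.sqrt_nonneg (1 - a ^ 2)
  have : Del a r ≠ 0 := by
    unfold Del
    unfold rplus at hr
    nlinarith
  exact_mod_cast this

theorem rplus_lt_three (a : ℝ) : rplus a < 3 := by
  have : Real.sqrt (1 - a ^ 2) ≤ 1 := by
    rw [Real.sqrt_le_one]
    nlinarith [sq_nonneg a]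
  unfold rplus
  linarith

/-- `L y = 0`. -/
theorem odeA {y y1 y2 : ℝ → ℂ}
    (h1 : ∀ z ∈ Set.Ioo (-1 : ℝ) 1, HasDerivAt y (y1 z) z)
    (h2 : ∀ z ∈ Set.Ioo (-1 : ℝ) 1, HasDerivAt y1 (y2 z) z)
    (h : ∀ z ∈ Set.Ioo (-1 : ℝ) 1, (1 - (z : ℂ) ^ 2) * y2 z + 2 * (z : ℂ) * y1 z = 0) :
    ∃ A B : ℂ, ∀ z ∈ Set.Ioo (-1 : ℝ) 1, y z = A + B * ((z : ℂ) * ((z : ℂ) ^ 2 - 3)) := by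
  have m0 : (0 : ℝ) ∈ Set.Ioo (-1 : ℝ) 1 := by norm_num
  have hB := const_of_deriv_zero (s := Set.Ioo (-1 : ℝ) 1) isOpen_Ioo isPreconnected_Ioo
    (f := fun z : ℝ => y1 z / (1 - (z : ℂ) ^ 2)) ?_ m0
  · obtain ⟨C, hB⟩ := hB
    have hA := const_of_deriv_zero (s := Set.Ioo (-1 : ℝ) 1) isOpen_Ioo isPreconnected_Ioo
      (f := fun z : ℝ => y z - (-C / 3) * ((z : ℂ) * ((z : ℂ) ^ 2 - 3))) ?_ m0
    · obtain ⟨A, hA⟩ := hA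
      refine ⟨A, -C / 3, fun z hz => ?_⟩
      have := hA z hz
      linear_combination this
    · intro z hz
      have := (h1 z hz).sub (((hcast z).mul (((hcast z).pow 2).sub_const 3)).const_mul (-C / 3))
      refine this.congr_deriv ?_
      have e := hB z hz
      rw [div_eq_iff (one_sub_sq_ne hz)] at e
      rw [e]
      push_cast
      simp
      ring
  · intro z hz
    have hn := one_sub_sq_ne hz
    have := (h2 z hz).div (((hcast z).pow 2).const_sub 1) hn
    refine this.congr_deriv ?_
    have e := h z hz
    rw [div_eq_zero_iff]
    left
    simp
    linear_combination e

/-- `L y = 2 y`. -/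
theorem odeB {y y1 y2 : ℝ → ℂ}
    (h1 : ∀ z ∈ Set.Ioo (-1 : ℝ) 1, HasDerivAt y (y1 z) z)
    (h2 : ∀ z ∈ Set.Ioo (-1 : ℝ) 1, HasDerivAt y1 (y2 z) z)
    (h : ∀ z ∈ Set.Ioo (-1 : ℝ) 1,
      (1 - (z : ℂ) ^ 2) * y2 z + 2 * (z : ℂ) * y1 z - 2 * y z = 0) :
    ∃ A B : ℂ, ∀ z ∈ Set.Ioo (-1 : ℝ) 1, y z = A * (z : ℂ) + B * (1 + (z : ℂ) ^ 2) := by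
  have m0 : (0 : ℝ) ∈ Set.Ioo (-1 : ℝ) 1 := by norm_num
  have hB := const_of_deriv_zero (s := Set.Ioo (-1 : ℝ) 1) isOpen_Ioo isPreconnected_Ioo
    (f := fun z : ℝ => (y z - (z : ℂ) * y1 z) / (1 - (z : ℂ) ^ 2)) ?_ m0
  · obtain ⟨C, hB⟩ := hB
    have hA := const_of_deriv_zero (s := Set.Ioo (-1 : ℝ) 1) isOpen_Ioo isPreconnected_Ioo
      (f := fun z : ℝ => ((1 + (z : ℂ) ^ 2) * y1 z - 2 * (z : ℂ) * y z) / (1 - (z : ℂ) ^ 2)) ?_ m0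
    · obtain ⟨A, hA⟩ := hA
      refine ⟨A, C, fun z hz => ?_⟩
      rw [← hA z hz, ← hB z hz]
      have hn := one_sub_sq_ne hz
      field_simp
      ring
    · intro z hz
      have hn := one_sub_sq_ne hz
      have := ((((((hcast z).pow 2).const_add 1).mul (h2 z hz)).sub
        (((hcast z).const_mul 2).mul (h1 z hz)))).div (((hcast z).pow 2).const_sub 1) hn
      refine this.congr_deriv ?_
      have e := h z hz
      rw [div_eq_zero_iff]
      left
      simp
      linear_combination (1 + (z : ℂ) ^ 2) * e
  · intro z hz
    have hn := one_sub_sq_ne hz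
    have := ((h1 z hz).sub ((hcast z).mul (h2 z hz))).div (((hcast z).pow 2).const_sub 1) hn
    refine this.congr_deriv ?_
    have e := h z hz
    rw [div_eq_zero_iff]
    left
    simp
    linear_combination (-(z : ℂ)) * e

/-- cubic in `r`. -/
def cub (b0 b1 b2 b3 : ℂ) (r : ℝ) : ℂ :=
  b0 + b1 * (r : ℂ) + b2 * (r : ℂ) ^ 2 + b3 * (r : ℂ) ^ 3

theorem hasDerivAt_cub (b0 b1 b2 b3 : ℂ) (r : ℝ) :
    HasDerivAt (cub b0 b1 b2 b3) (cub b1 (2 * b2) (3 * b3) 0 r) r := by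
  have := ((((hcast r).const_mul b1).const_add b0).add (((hcast r).pow 2).const_mul b2)).add
    (((hcast r).pow 3).const_mul b3)
  refine this.congr_deriv ?_
  simp [cub]
  ring

theorem hasDerivAt_Del (a r : ℝ) :
    HasDerivAt (fun r : ℝ => (Del a r : ℂ)) (2 * ((r : ℂ) - 1)) r := by
  have := ((hcast r).mul ((hcast r).sub_const 2)).add_const ((a : ℂ) ^ 2)
  refine (this.congr_deriv (f' := _) (g' := 2 * ((r : ℂ) - 1)) ?_).congr_of_eventuallyEq ?_
  · ring
  · exact Filter.Eventually.of_forall fun x => by simp [Del]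

theorem cub_zero {b0 b1 b2 b3 : ℂ} {ρ : ℝ} (hρ : ρ < 3)
    (h : ∀ r : ℝ, ρ < r → cub b0 b1 b2 b3 r = 0) : b0 = 0 ∧ b1 = 0 ∧ b2 = 0 ∧ b3 = 0 := by
  have e3 := h 3 hρ
  have e4 := h 4 (by linarith)
  have e5 := h 5 (by linarith)
  have e6 := h 6 (by linarith)
  simp only [cub] at e3 e4 e5 e6
  push_cast at e3 e4 e5 e6
  have k3 : b3 = 0 := by linear_combination (e6 - 3 * e5 + 3 * e4 - e3) / 6
  have k2 : b2 = 0 := by linear_combination (e5 - 2 * e4 + e3) / 2 - 12 * k3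
  have k1 : b1 = 0 := by linear_combination e4 - e3 - 7 * k2 - 37 * k3
  have k0 : b0 = 0 := by linear_combination e3 - 3 * k1 - 9 * k2 - 27 * k3
  exact ⟨k0, k1, k2, k3⟩

/-- Teukolsky operator on functions cubic in `r`. -/
theorem Teuk_formula {a : ℝ} (ha : |a| < 1) {Φ : ℝ → ℝ → ℂ} {y yp ypp : Fin 4 → ℝ → ℂ}
    (h1 : ∀ i, ∀ z ∈ Set.Ioo (-1 : ℝ) 1, HasDerivAt (y i) (yp i z) z)
    (h2 : ∀ i, ∀ z ∈ Set.Ioo (-1 : ℝ) 1, HasDerivAt (yp i) (ypp i z) z)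
    (hΦ : ∀ r z : ℝ, rplus a < r → z ∈ Set.Ioo (-1 : ℝ) 1 →
      Φ r z = ((Del a r : ℂ) ^ 2)⁻¹ * (1 - (z : ℂ) ^ 2)⁻¹ *
        cub (y 0 z) (y 1 z) (y 2 z) (y 3 z) r)
    {r z : ℝ} (hr : rplus a < r) (hz : z ∈ Set.Ioo (-1 : ℝ) 1) :
    TeukSAS a 2 Φ r z = ((Del a r : ℂ) ^ 2)⁻¹ * (1 - (z : ℂ) ^ 2)⁻¹ *
      ((1 - (z : ℂ) ^ 2) * cub (ypp 0 z) (ypp 1 z) (ypp 2 z) (ypp 3 z) r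
        + 2 * (z : ℂ) * cub (yp 0 z) (yp 1 z) (yp 2 z) (yp 3 z) r
        + cub (2 * y 1 z + 2 * (a : ℂ) ^ 2 * y 2 z)
            (-2 * y 1 z + 6 * (a : ℂ) ^ 2 * y 3 z) (-2 * y 2 z - 6 * y 3 z) 0 r) := by
  -- r-part
  have hr1 : ∀ x : ℝ, rplus a < x → deriv (fun r'' => Φ r'' z) x =
      (1 - (z : ℂ) ^ 2)⁻¹ * (cub (y 1 z) (2 * y 2 z) (3 * y 3 z) 0 x / (Del a x : ℂ) ^ 2
        - 2 * (2 * ((x : ℂ) - 1)) * cub (y 0 z) (y 1 z) (y 2 z) (y 3 z) x / (Del a x : ℂ) ^ 3) := by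
    intro x hx
    have hD := Del_ne ha hx
    have := (((hasDerivAt_cub (y 0 z) (y 1 z) (y 2 z) (y 3 z) x).div
      ((hasDerivAt_Del a x).pow 2) (pow_ne_zero 2 hD)).const_mul ((1 - (z : ℂ) ^ 2)⁻¹))
    have h' : HasDerivAt (fun r'' => Φ r'' z) _ x := this.congr_of_eventuallyEq (by
      filter_upwards [lt_mem_nhds hx] with t ht
      rw [hΦ t z ht hz]
      simp only [Pi.div_apply, Pi.pow_apply]
      rw [div_eq_mul_inv]
      ring)
    rw [h'.deriv]
    congr 1
    simp only [Pi.pow_apply]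
    field_simp
    push_cast
    ring
  have hr2 : deriv (fun r' => (Del a r' : ℂ) ^ ((2 : ℤ) + 1) * deriv (fun r'' => Φ r'' z) r') r =
      (1 - (z : ℂ) ^ 2)⁻¹ * ((Del a r : ℂ) * cub (2 * y 2 z) (2 * (3 * y 3 z)) (3 * 0) 0 r
        - (2 * ((r : ℂ) - 1)) * cub (y 1 z) (2 * y 2 z) (3 * y 3 z) 0 r
        - 4 * cub (y 0 z) (y 1 z) (y 2 z) (y 3 z) r) := by
    have := (((hasDerivAt_Del a r).mul (hasDerivAt_cub (y 1 z) (2 * y 2 z) (3 * y 3 z) 0 r)).sub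
      ((((hcast r).sub_const 1).const_mul 4).mul
        (hasDerivAt_cub (y 0 z) (y 1 z) (y 2 z) (y 3 z) r))).const_mul ((1 - (z : ℂ) ^ 2)⁻¹)
    have h' : HasDerivAt
        (fun r' => (Del a r' : ℂ) ^ ((2 : ℤ) + 1) * deriv (fun r'' => Φ r'' z) r') _ r :=
      this.congr_of_eventuallyEq (by
        filter_upwards [lt_mem_nhds hr] with t ht
        have hD := Del_ne ha ht
        rw [hr1 t ht]
        simp only [Pi.mul_apply, Pi.sub_apply]
        have e3 : (Del a t : ℂ) ^ ((2 : ℤ) + 1) = (Del a t : ℂ) ^ 3 := by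
          norm_cast
        rw [e3]
        field_simp
        ring)
    rw [h'.deriv]
    congr 1
    ring
  -- z-part
  have hcz : ∀ x ∈ Set.Ioo (-1 : ℝ) 1,
      HasDerivAt (fun z => cub (y 0 z) (y 1 z) (y 2 z) (y 3 z) r)
        (cub (yp 0 x) (yp 1 x) (yp 2 x) (yp 3 x) r) x := by
    intro x hx
    exact (((h1 0 x hx).add ((h1 1 x hx).mul_const _)).add ((h1 2 x hx).mul_const _)).add
      ((h1 3 x hx).mul_const _)
  have hcz2 : ∀ x ∈ Set.Ioo (-1 : ℝ) 1,
      HasDerivAt (fun z => cub (yp 0 z) (yp 1 z) (yp 2 z) (yp 3 z) r)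
        (cub (ypp 0 x) (ypp 1 x) (ypp 2 x) (ypp 3 x) r) x := by
    intro x hx
    exact (((h2 0 x hx).add ((h2 1 x hx).mul_const _)).add ((h2 2 x hx).mul_const _)).add
      ((h2 3 x hx).mul_const _)
  have hz1 : ∀ x ∈ Set.Ioo (-1 : ℝ) 1, deriv (fun z'' => Φ r z'') x =
      ((Del a r : ℂ) ^ 2)⁻¹ * (cub (yp 0 x) (yp 1 x) (yp 2 x) (yp 3 x) r / (1 - (x : ℂ) ^ 2)
        + 2 * (x : ℂ) * cub (y 0 x) (y 1 x) (y 2 x) (y 3 x) r / (1 - (x : ℂ) ^ 2) ^ 2) := by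
    intro x hx
    have hn := one_sub_sq_ne hx
    have := (((hcz x hx).div (((hcast x).pow 2).const_sub 1) hn)).const_mul (((Del a r : ℂ) ^ 2)⁻¹)
    have h' : HasDerivAt (fun z'' => Φ r z'') _ x := this.congr_of_eventuallyEq (by
      filter_upwards [isOpen_Ioo.mem_nhds hx] with t ht
      rw [hΦ r t hr ht]
      simp only [Pi.div_apply, Pi.pow_apply]
      rw [div_eq_mul_inv]
      ring)
    rw [h'.deriv]
    congr 1
    simp only [Pi.pow_apply]
    field_simp
    push_cast
    ring
  have hz2 : deriv (fun z' => ((1 - z' ^ 2 : ℝ) : ℂ) * deriv (fun z'' => Φ r z'') z') z =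
      ((Del a r : ℂ) ^ 2)⁻¹ * (cub (ypp 0 z) (ypp 1 z) (ypp 2 z) (ypp 3 z) r
        + (2 * cub (y 0 z) (y 1 z) (y 2 z) (y 3 z) r
          + 2 * (z : ℂ) * cub (yp 0 z) (yp 1 z) (yp 2 z) (yp 3 z) r) / (1 - (z : ℂ) ^ 2)
        + 4 * (z : ℂ) ^ 2 * cub (y 0 z) (y 1 z) (y 2 z) (y 3 z) r / (1 - (z : ℂ) ^ 2) ^ 2) := by
    have hn := one_sub_sq_ne hz
    have := ((hcz2 z hz).add ((((hcast z).const_mul 2).mul (hcz z hz)).div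
      (((hcast z).pow 2).const_sub 1) hn)).const_mul (((Del a r : ℂ) ^ 2)⁻¹)
    have h' : HasDerivAt
        (fun z' => ((1 - z' ^ 2 : ℝ) : ℂ) * deriv (fun z'' => Φ r z'') z') _ z :=
      this.congr_of_eventuallyEq (by
        filter_upwards [isOpen_Ioo.mem_nhds hz] with t ht
        have hn := one_sub_sq_ne ht
        rw [hz1 t ht]
        simp only [Pi.mul_apply, Pi.add_apply, Pi.div_apply, Pi.pow_apply]
        push_cast
        have hD := Del_ne ha hr
        field_simp)
    rw [h'.deriv]
    congr 1
    simp only [Pi.mul_apply, Pi.pow_apply]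
    field_simp
    push_cast
    ring
  unfold TeukSAS
  rw [hr2, hz2, hΦ r z hr hz]
  have hn := one_sub_sq_ne hz
  have e2 : (Del a r : ℂ) ^ (-2 : ℤ) = ((Del a r : ℂ) ^ 2)⁻¹ := by
    rw [zpow_neg]; norm_cast
  rw [e2]
  have hD : (Del a r : ℂ) = (r : ℂ) * ((r : ℂ) - 2) + (a : ℂ) ^ 2 := by simp [Del]
  generalize ((Del a r : ℂ) ^ 2)⁻¹ = d
  rw [hD]
  simp only [cub]
  push_cast
  field_simp
  ring

/-- The coefficients in `r` of `(1-z²)Φ_Ker`. -/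
def yK (a : ℝ) (c : Fin 8 → ℂ) : Fin 4 → ℝ → ℂ :=
  ![fun z => c 0 - c 1 * z + c 2 * (z * ((z : ℂ) ^ 2 - 3)) - c 3 * (z : ℂ) ^ 2
      - c 4 * (a : ℂ) ^ 2 * z - c 6 * (a : ℂ) ^ 2 * (z : ℂ) ^ 2,
    fun z => c 1 * z + c 3 * (1 + (z : ℂ) ^ 2) + 3 * (a : ℂ) ^ 2 * c 5
      + c 7 * (a : ℂ) ^ 2 * (3 * (z : ℂ) ^ 3 + 12 * z),
    fun z => c 4 * z + c 6 * (1 + (z : ℂ) ^ 2) - 3 * c 5 - c 7 * (3 * (z : ℂ) ^ 3 + 12 * z),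
    fun z => c 5 + c 7 * (z * ((z : ℂ) ^ 2 - 3))]

theorem PhiKer_eq (a : ℝ) (c : Fin 8 → ℂ) (r z : ℝ) :
    PhiKer a c r z =
      (1 - (z : ℂ) ^ 2)⁻¹ * cub (yK a c 0 z) (yK a c 1 z) (yK a c 2 z) (yK a c 3 z) r := by
  unfold PhiKer
  congr 1
  simp [cub, yK]
  ring

theorem Del_zpow (a r : ℝ) : (Del a r : ℂ) ^ (-2 : ℤ) = ((Del a r : ℂ) ^ 2)⁻¹ := by
  rw [zpow_neg]; norm_cast

theorem poly_hasDeriv (k0 k1 k2 k3 : ℂ) (z : ℝ) {f : ℝ → ℂ}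
    (hf : f = cub k0 k1 k2 k3) : HasDerivAt f (cub k1 (2 * k2) (3 * k3) 0 z) z := by
  subst hf
  exact hasDerivAt_cub _ _ _ _ _

/-- `yK` as cubics in `z`. -/
def kK (a : ℝ) (c : Fin 8 → ℂ) : Fin 4 → Fin 4 → ℂ :=
  ![![c 0, - c 1 - 3 * c 2 - c 4 * (a : ℂ) ^ 2, - c 3 - c 6 * (a : ℂ) ^ 2, c 2],
    ![c 3 + 3 * (a : ℂ) ^ 2 * c 5, c 1 + 12 * c 7 * (a : ℂ) ^ 2, c 3, 3 * c 7 * (a : ℂ) ^ 2],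
    ![c 6 - 3 * c 5, c 4 - 12 * c 7, c 6, -3 * c 7],
    ![c 5, -3 * c 7, 0, c 7]]

theorem yK_eq (a : ℝ) (c : Fin 8 → ℂ) (i : Fin 4) :
    yK a c i = cub (kK a c i 0) (kK a c i 1) (kK a c i 2) (kK a c i 3) := by
  funext z
  fin_cases i <;> simp [yK, kK, cub] <;> ring

theorem ker_backward {a : ℝ} (ha : |a| < 1) {Φ : ℝ → ℝ → ℂ} {c : Fin 8 → ℂ}
    (h : ∀ q ∈ U2 a, Φ q.1 q.2 = (Del a q.1 : ℂ) ^ (-2 : ℤ) * PhiKer a c q.1 q.2) :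
    (∀ q ∈ U2 a,
        (Del a q.1 : ℂ) ^ 2 * deriv^[4] (fun r' => (Del a r' : ℂ) ^ 2 * Φ r' q.2) q.1 = 0) ∧
      (∀ q ∈ U2 a, TeukSAS a 2 Φ q.1 q.2 = 0) := by
  have hΦ : ∀ r z : ℝ, rplus a < r → z ∈ Set.Ioo (-1 : ℝ) 1 →
      Φ r z = ((Del a r : ℂ) ^ 2)⁻¹ * (1 - (z : ℂ) ^ 2)⁻¹ *
        cub (yK a c 0 z) (yK a c 1 z) (yK a c 2 z) (yK a c 3 z) r := by
    intro r z hr hz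
    have := h (r, z) ⟨hr, hz.1, hz.2⟩
    simp only at this
    rw [this, Del_zpow, PhiKer_eq]
    ring
  constructor
  · rintro ⟨r, z⟩ ⟨hr, hz⟩
    have hz' : z ∈ Set.Ioo (-1 : ℝ) 1 := hz
    simp only at hr ⊢
    have step : ∀ {f g : ℝ → ℂ}, (∀ x, rplus a < x → f x = g x) →
        ∀ x, rplus a < x → deriv f x = deriv g x := by
      intro f g hfg x hx
      apply Filter.EventuallyEq.deriv_eq
      filter_upwards [lt_mem_nhds hx] with t ht using hfg t ht
    have stepn : ∀ n : ℕ, ∀ {f g : ℝ → ℂ}, (∀ x, rplus a < x → f x = g x) →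
        ∀ x, rplus a < x → deriv^[n] f x = deriv^[n] g x := by
      intro n
      induction n with
      | zero => intro f g hfg; simpa using hfg
      | succ n ih => intro f g hfg; exact ih (step hfg)
    have hd : ∀ b0 b1 b2 b3 : ℂ, deriv (cub b0 b1 b2 b3) = cub b1 (2 * b2) (3 * b3) 0 :=
      fun b0 b1 b2 b3 => funext fun x => (hasDerivAt_cub b0 b1 b2 b3 x).deriv
    have key := stepn 4 (f := fun r' => (Del a r' : ℂ) ^ 2 * Φ r' z)
      (g := cub ((1 - (z : ℂ) ^ 2)⁻¹ * yK a c 0 z) ((1 - (z : ℂ) ^ 2)⁻¹ * yK a c 1 z)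
        ((1 - (z : ℂ) ^ 2)⁻¹ * yK a c 2 z) ((1 - (z : ℂ) ^ 2)⁻¹ * yK a c 3 z)) ?_ r hr
    · rw [key]
      simp [hd, cub]
    · intro x hx
      have hD := Del_ne ha hx
      rw [hΦ x z hx hz', ← mul_assoc, ← mul_assoc, mul_inv_cancel₀ (pow_ne_zero 2 hD)]
      simp only [cub]
      ring
  · rintro ⟨r, z⟩ ⟨hr, hz⟩
    have hz' : z ∈ Set.Ioo (-1 : ℝ) 1 := hz
    simp only at hr ⊢
    rw [Teuk_formula ha (fun i z _ => poly_hasDeriv _ _ _ _ z (yK_eq a c i))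
      (fun i z _ => poly_hasDeriv _ _ _ _ z rfl) hΦ hr hz']
    simp [cub, yK, kK]
    right
    ring

theorem ker_unique {a : ℝ} (ha : |a| < 1) {c c' : Fin 8 → ℂ}
    (h : ∀ q ∈ U2 a, (Del a q.1 : ℂ) ^ (-2 : ℤ) * PhiKer a c q.1 q.2 =
      (Del a q.1 : ℂ) ^ (-2 : ℤ) * PhiKer a c' q.1 q.2) : c = c' := by
  have key : ∀ z ∈ Set.Ioo (-1 : ℝ) 1, yK a c 0 z - yK a c' 0 z = 0 ∧
      yK a c 1 z - yK a c' 1 z = 0 ∧ yK a c 2 z - yK a c' 2 z = 0 ∧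
      yK a c 3 z - yK a c' 3 z = 0 := by
    intro z hz
    apply cub_zero (rplus_lt_three a)
    intro r hr
    have := h (r, z) ⟨hr, hz.1, hz.2⟩
    simp only [PhiKer_eq] at this
    have e := mul_left_cancel₀ (inv_ne_zero (one_sub_sq_ne hz))
      (mul_left_cancel₀ (zpow_ne_zero _ (Del_ne ha hr)) this)
    simp only [cub] at e ⊢
    linear_combination e
  obtain ⟨p0, p1, p2, p3⟩ := key 0 (by norm_num)
  obtain ⟨q0, q1, q2, q3⟩ := key (1 / 2) (by norm_num)
  obtain ⟨s0, s1, s2, s3⟩ := key (-1 / 2) (by norm_num)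
  simp [yK] at p0 p1 p2 p3 q0 q1 q2 q3 s0 s1 s2 s3
  have e5 : c 5 = c' 5 := by linear_combination p3
  have e7 : c 7 = c' 7 := by linear_combination (q3 - p3) / (-11 / 8)
  have e6 : c 6 = c' 6 := by linear_combination p2 + 3 * e5
  have e3 : c 3 = c' 3 := by linear_combination p1 - 3 * (a : ℂ) ^ 2 * e5
  have e4 : c 4 = c' 4 := by
    linear_combination 2 * q2 - 5 / 2 * e6 + 6 * e5 + (51 / 4) * e7
  have e1 : c 1 = c' 1 := by
    linear_combination 2 * q1 - 5 / 2 * e3 - 6 * (a : ℂ) ^ 2 * e5 - (51 / 4) * (a : ℂ) ^ 2 * e7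
  have e0 : c 0 = c' 0 := by linear_combination p0
  have e2 : c 2 = c' 2 := by
    linear_combination (q0 - e0 + e1 / 2 + e3 / 4 + (a : ℂ) ^ 2 * e4 / 2 +
      (a : ℂ) ^ 2 * e6 / 4) / (-11 / 8)
  funext i
  fin_cases i
  exacts [e0, e1, e2, e3, e4, e5, e6, e7]

theorem ker_forward {a : ℝ} (ha : |a| < 1) {Φ : ℝ → ℝ → ℂ}
    (hsmooth : ContDiffOn ℝ (⊤ : ℕ∞) (fun q : ℝ × ℝ => Φ q.1 q.2) (U2 a))
    (h4 : ∀ q ∈ U2 a,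
        (Del a q.1 : ℂ) ^ 2 * deriv^[4] (fun r' => (Del a r' : ℂ) ^ 2 * Φ r' q.2) q.1 = 0)
    (hT : ∀ q ∈ U2 a, TeukSAS a 2 Φ q.1 q.2 = 0) :
    ∃ c : Fin 8 → ℂ, ∀ q ∈ U2 a,
      Φ q.1 q.2 = (Del a q.1 : ℂ) ^ (-2 : ℤ) * PhiKer a c q.1 q.2 := by
  have hDel : ContDiff ℝ (⊤ : ℕ∞) (fun r : ℝ => (Del a r : ℂ) ^ 2) := by
    have : ContDiff ℝ (⊤ : ℕ∞) (fun r : ℝ => Del a r) := by unfold Del; fun_prop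
    exact (Complex.ofRealCLM.contDiff.comp this).pow 2
  have hcub : ∀ z : ℝ, ∃ b : Fin 4 → ℂ, z ∈ Set.Ioo (-1 : ℝ) 1 → ∀ r ∈ Set.Ioi (rplus a),
      (Del a r : ℂ) ^ 2 * Φ r z
        = b 0 + b 1 * (r : ℂ) + b 2 * (r : ℂ) ^ 2 + b 3 * (r : ℂ) ^ 3 := by
    intro z
    by_cases hz : z ∈ Set.Ioo (-1 : ℝ) 1
    · have hs : ContDiffOn ℝ (⊤ : ℕ∞) (fun r : ℝ => Φ r z) (Set.Ioi (rplus a)) :=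
        hsmooth.comp (f := fun r : ℝ => (r, z)) (by fun_prop) (fun r hr => ⟨hr, hz.1, hz.2⟩)
      obtain ⟨b, hb⟩ := cubic_of_deriv4 (hDel.contDiffOn.mul hs) (fun r hr =>
        (mul_eq_zero.mp (h4 (r, z) ⟨hr, hz.1, hz.2⟩)).resolve_left
          (pow_ne_zero 2 (Del_ne ha hr)))
      exact ⟨b, fun _ => hb⟩
    · exact ⟨0, fun h => absurd h hz⟩
  choose b hb using hcub
  have h3 := rplus_lt_three a
  -- the coefficient functions
  let V : ℝ → ℝ → ℂ := fun R z => (1 - (z : ℂ) ^ 2) * ((Del a R : ℂ) ^ 2 * Φ R z)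
  have hV : ∀ R, rplus a < R → ContDiffOn ℝ (⊤ : ℕ∞) (V R) (Set.Ioo (-1 : ℝ) 1) := by
    intro R hR
    have hs : ContDiffOn ℝ (⊤ : ℕ∞) (fun z : ℝ => Φ R z) (Set.Ioo (-1 : ℝ) 1) :=
      hsmooth.comp (f := fun z : ℝ => (R, z)) (by fun_prop) (fun z hz => ⟨hR, hz.1, hz.2⟩)
    have hc : ContDiff ℝ (⊤ : ℕ∞) (fun z : ℝ => 1 - (z : ℂ) ^ 2) :=
      contDiff_const.sub (Complex.ofRealCLM.contDiff.pow 2)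
    exact hc.contDiffOn.mul (contDiffOn_const.mul hs)
  let w3 : ℝ → ℂ := fun z => (V 6 z - 3 * V 5 z + 3 * V 4 z - V 3 z) / 6
  let w2 : ℝ → ℂ := fun z => (V 5 z - 2 * V 4 z + V 3 z) / 2 - 12 * w3 z
  let w1 : ℝ → ℂ := fun z => V 4 z - V 3 z - 7 * w2 z - 37 * w3 z
  let w0 : ℝ → ℂ := fun z => V 3 z - 3 * w1 z - 9 * w2 z - 27 * w3 z
  have v3 := hV 3 h3
  have v4 := hV 4 (by linarith)
  have v5 := hV 5 (by linarith)
  have v6 := hV 6 (by linarith)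
  have s3 : ContDiffOn ℝ (⊤ : ℕ∞) w3 (Set.Ioo (-1 : ℝ) 1) :=
    (((v6.sub (contDiffOn_const.mul v5)).add (contDiffOn_const.mul v4)).sub v3).div_const 6
  have s2 : ContDiffOn ℝ (⊤ : ℕ∞) w2 (Set.Ioo (-1 : ℝ) 1) :=
    (((v5.sub (contDiffOn_const.mul v4)).add v3).div_const 2).sub (contDiffOn_const.mul s3)
  have s1 : ContDiffOn ℝ (⊤ : ℕ∞) w1 (Set.Ioo (-1 : ℝ) 1) :=
    ((v4.sub v3).sub (contDiffOn_const.mul s2)).sub (contDiffOn_const.mul s3)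
  have s0 : ContDiffOn ℝ (⊤ : ℕ∞) w0 (Set.Ioo (-1 : ℝ) 1) :=
    ((v3.sub (contDiffOn_const.mul s1)).sub (contDiffOn_const.mul s2)).sub
      (contDiffOn_const.mul s3)
  let y : Fin 4 → ℝ → ℂ := ![w0, w1, w2, w3]
  have hy : ∀ i, ContDiffOn ℝ (⊤ : ℕ∞) (y i) (Set.Ioo (-1 : ℝ) 1) := by
    intro i
    fin_cases i
    exacts [s0, s1, s2, s3]
  have hyb : ∀ z ∈ Set.Ioo (-1 : ℝ) 1, ∀ i, y i z = (1 - (z : ℂ) ^ 2) * b z i := by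
    intro z hz
    have V3 := congrArg (fun t => (1 - (z : ℂ) ^ 2) * t) (hb z hz 3 h3)
    have V4 := congrArg (fun t => (1 - (z : ℂ) ^ 2) * t)
      (hb z hz 4 (by simp only [Set.mem_Ioi]; linarith))
    have V5 := congrArg (fun t => (1 - (z : ℂ) ^ 2) * t)
      (hb z hz 5 (by simp only [Set.mem_Ioi]; linarith))
    have V6 := congrArg (fun t => (1 - (z : ℂ) ^ 2) * t)
      (hb z hz 6 (by simp only [Set.mem_Ioi]; linarith))
    change V 3 z = _ at V3
    change V 4 z = _ at V4
    change V 5 z = _ at V5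
    change V 6 z = _ at V6
    push_cast at V3 V4 V5 V6
    have k3 : w3 z = (1 - (z : ℂ) ^ 2) * b z 3 := by
      simp only [w3]; rw [V3, V4, V5, V6]; ring
    have k2 : w2 z = (1 - (z : ℂ) ^ 2) * b z 2 := by
      simp only [w2]; rw [k3, V3, V4, V5]; ring
    have k1 : w1 z = (1 - (z : ℂ) ^ 2) * b z 1 := by
      simp only [w1]; rw [k3, k2, V3, V4]; ring
    have k0 : w0 z = (1 - (z : ℂ) ^ 2) * b z 0 := by
      simp only [w0]; rw [k3, k2, k1, V3]; ring
    intro i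
    fin_cases i
    exacts [k0, k1, k2, k3]
  clear_value y
  have hΦ : ∀ r z : ℝ, rplus a < r → z ∈ Set.Ioo (-1 : ℝ) 1 →
      Φ r z = ((Del a r : ℂ) ^ 2)⁻¹ * (1 - (z : ℂ) ^ 2)⁻¹ *
        cub (y 0 z) (y 1 z) (y 2 z) (y 3 z) r := by
    intro r z hr hz
    have e := hb z hz r hr
    have hn := one_sub_sq_ne hz
    have hD := Del_ne ha hr
    simp only [cub, hyb z hz]
    field_simp
    linear_combination e
  have d1 : ∀ i, ∀ z ∈ Set.Ioo (-1 : ℝ) 1, HasDerivAt (y i) (deriv (y i) z) z :=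
    fun i z hz => hasDerivAt_iter isOpen_Ioo (hy i) 0 hz
  have d2 : ∀ i, ∀ z ∈ Set.Ioo (-1 : ℝ) 1,
      HasDerivAt (deriv (y i)) (deriv (deriv (y i)) z) z :=
    fun i z hz => hasDerivAt_iter isOpen_Ioo (hy i) 1 hz
  have odes : ∀ z ∈ Set.Ioo (-1 : ℝ) 1,
      ((1 - (z : ℂ) ^ 2) * deriv (deriv (y 0)) z + 2 * (z : ℂ) * deriv (y 0) z
        + (2 * y 1 z + 2 * (a : ℂ) ^ 2 * y 2 z) = 0) ∧
      ((1 - (z : ℂ) ^ 2) * deriv (deriv (y 1)) z + 2 * (z : ℂ) * deriv (y 1) z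
        + (-2 * y 1 z + 6 * (a : ℂ) ^ 2 * y 3 z) = 0) ∧
      ((1 - (z : ℂ) ^ 2) * deriv (deriv (y 2)) z + 2 * (z : ℂ) * deriv (y 2) z
        + (-2 * y 2 z - 6 * y 3 z) = 0) ∧
      ((1 - (z : ℂ) ^ 2) * deriv (deriv (y 3)) z + 2 * (z : ℂ) * deriv (y 3) z = 0) := by
    intro z hz
    apply cub_zero h3
    intro r hr
    have e := hT (r, z) ⟨hr, hz.1, hz.2⟩
    simp only at e
    rw [Teuk_formula ha d1 d2 hΦ hr hz] at e
    have e' := (mul_eq_zero.mp e).resolve_left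
      (mul_ne_zero (inv_ne_zero (pow_ne_zero 2 (Del_ne ha hr))) (inv_ne_zero (one_sub_sq_ne hz)))
    simp only [cub] at e' ⊢
    linear_combination e'
  -- solve
  obtain ⟨c5, c7, H3⟩ := odeA (d1 3) (d2 3) (fun z hz => (odes z hz).2.2.2)
  have dc := fun (k0 k1 k2 k3 : ℂ) (z : ℝ) => hasDerivAt_cub k0 k1 k2 k3 z
  obtain ⟨c4, c6, H2⟩ := odeB
    (fun z hz => (d1 2 z hz).add (dc (3 * c5) (12 * c7) 0 (3 * c7) z))
    (fun z hz => (d2 2 z hz).add (dc (12 * c7) (2 * 0) (3 * (3 * c7)) 0 z))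
    (fun z hz => by
      have e := (odes z hz).2.2.1
      rw [H3 z hz] at e
      simp only [Pi.add_apply, cub]
      linear_combination e)
  obtain ⟨c1, c3, H1⟩ := odeB
    (fun z hz => (d1 1 z hz).add
      (dc (-3 * (a : ℂ) ^ 2 * c5) (-12 * (a : ℂ) ^ 2 * c7) 0 (-3 * (a : ℂ) ^ 2 * c7) z))
    (fun z hz => (d2 1 z hz).add
      (dc (-12 * (a : ℂ) ^ 2 * c7) (2 * 0) (3 * (-3 * (a : ℂ) ^ 2 * c7)) 0 z))
    (fun z hz => by
      have e := (odes z hz).2.1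
      rw [H3 z hz] at e
      simp only [Pi.add_apply, cub]
      linear_combination e)
  obtain ⟨c0, c2, H0⟩ := odeA
    (fun z hz => (d1 0 z hz).add
      (dc 0 (c1 + (a : ℂ) ^ 2 * c4) (c3 + (a : ℂ) ^ 2 * c6) 0 z))
    (fun z hz => (d2 0 z hz).add
      (dc (c1 + (a : ℂ) ^ 2 * c4) (2 * (c3 + (a : ℂ) ^ 2 * c6)) (3 * 0) 0 z))
    (fun z hz => by
      have e := (odes z hz).1
      have e1 := H1 z hz
      have e2 := H2 z hz
      simp only [Pi.add_apply, cub] at e1 e2 ⊢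
      linear_combination e - 2 * e1 - 2 * (a : ℂ) ^ 2 * e2)
  refine ⟨![c0, c1, c2, c3, c4, c5, c6, c7], ?_⟩
  rintro ⟨r, z⟩ ⟨hr, hz⟩
  have hz' : z ∈ Set.Ioo (-1 : ℝ) 1 := hz
  simp only at hr ⊢
  rw [hΦ r z hr hz', Del_zpow, PhiKer_eq, mul_assoc]
  congr 2
  have e0 := H0 z hz'
  have e1 := H1 z hz'
  have e2 := H2 z hz'
  have e3 := H3 z hz'
  simp only [Pi.add_apply, cub] at e0 e1 e2
  simp [cub, yK]
  linear_combination e0 + (r : ℂ) * e1 + (r : ℂ) ^ 2 * e2 + (r : ℂ) ^ 3 * e3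

/-- **Classification of the stationary axisymmetric kernel (`s = +2`).**  A smooth `Φ` on `U`
satisfies `Δ²∂_r⁴(Δ²Φ) = 0` and `𝒯₊₂Φ = 0` iff `Φ = Δ^{−2}Φ_Ker(c)` for a (then unique)
`c ∈ ℂ⁸`; the `s = +2` stationary axisymmetric kernel is `Δ^{−2}` times the `s = −2` one. -/
theorem SAS_kernel_classification_plus (a : ℝ) (ha : |a| < 1) (Φ : ℝ → ℝ → ℂ)
    (hsmooth : ContDiffOn ℝ (⊤ : ℕ∞) (fun q : ℝ × ℝ => Φ q.1 q.2) (U2 a)) :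
    ((∀ q ∈ U2 a,
        (Del a q.1 : ℂ) ^ 2 * deriv^[4] (fun r' => (Del a r' : ℂ) ^ 2 * Φ r' q.2) q.1 = 0) ∧
      (∀ q ∈ U2 a, TeukSAS a 2 Φ q.1 q.2 = 0)) ↔
    (∃! c : Fin 8 → ℂ, ∀ q ∈ U2 a,
        Φ q.1 q.2 = (Del a q.1 : ℂ) ^ (-2 : ℤ) * PhiKer a c q.1 q.2) := by
  constructor
  · rintro ⟨h4, hT⟩
    obtain ⟨c, hc⟩ := ker_forward ha hsmooth h4 hT
    refine ⟨c, hc, fun c' hc' => ?_⟩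
    exact ker_unique ha (fun q hq => by rw [← hc q hq, ← hc' q hq])
  · rintro ⟨c, hc, -⟩
    exact ker_backward ha hc

end Kerr
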